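/- Let S be a nonempty finite set, ν a probability distribution on S, and X_1,…,X_n i.i.d. samples from ν (n ≥ 1). Define the missing mass M := Σ_{x∈S} ν(x)·1{ x ∉ {X_1,…,X_n} }. Then E[M] = Σ_{x∈S} ν(x)·(1 − ν(x))^n ≤ 4|S|/(9n). -/

import Mathlib

open Finset

/-- `ν` is a probability distribution on the finite set `S`. -/
def IsDist {S : Type} [Fintype S] (ν : S → ℝ) : Prop :=
  (∀ x, 0 ≤ ν x) ∧ ∑ x, ν x = 1

/-- Probability of the sample sequence `X` under `n` i.i.d. samples from `ν`. -/
noncomputable def wt1 {S : Type} {n : ℕ} (ν : S → ℝ) (X : Fin n → S) : ℝ :=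
  ∏ i, ν (X i)

open scoped Classical

/-- The missing mass `M = Σ_x ν(x)·1{x ∉ {X_1,…,X_n}}` of a sample `X`. -/
noncomputable def missingMass {S : Type} [Fintype S] {n : ℕ} (ν : S → ℝ)
    (X : Fin n → S) : ℝ :=
  ∑ x, if ∀ i, X i ≠ x then ν x else 0

theorem elem_bound (x : ℝ) (h0 : 0 ≤ x) (h1 : x ≤ 1) (n : ℕ) (hn : 1 ≤ n) :
    x * (1 - x) ^ n ≤ 4 / (9 * n) := by
  have hn' : (0 : ℝ) < n := by exact_mod_cast hn
  have a : (1 - x) ^ n ≤ Real.exp (-(n * x)) := by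
    have h : 1 - x ≤ Real.exp (-x) := by linarith [Real.add_one_le_exp (-x)]
    calc (1 - x) ^ n ≤ (Real.exp (-x)) ^ n := pow_le_pow_left₀ (by linarith) h n
      _ = Real.exp (-(n * x)) := by rw [← Real.exp_nat_mul]; ring_nf
  have b : n * x ≤ Real.exp (n * x - 1) := by linarith [Real.add_one_le_exp (n * x - 1)]
  have c : n * x * Real.exp (-(n * x)) ≤ Real.exp (-1) := by
    calc n * x * Real.exp (-(n * x)) ≤ Real.exp (n * x - 1) * Real.exp (-(n * x)) :=
          mul_le_mul_of_nonneg_right b (Real.exp_pos _).le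
      _ = Real.exp (-1) := by rw [← Real.exp_add]; ring_nf
  have d : Real.exp (-1) ≤ 4 / 9 := by
    linarith [Real.exp_neg_one_lt_d9]
  have e : n * x * (1 - x) ^ n ≤ n * x * Real.exp (-(n * x)) :=
    mul_le_mul_of_nonneg_left a (by positivity)
  rw [le_div_iff₀ (by positivity)]
  nlinarith

theorem expect_eq (S : Type) [Fintype S] (ν : S → ℝ) (hν : IsDist ν) (n : ℕ) :
    (∑ X : Fin n → S, wt1 ν X * missingMass ν X) = ∑ x, ν x * (1 - ν x) ^ n := by
  unfold wt1 missingMass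
  simp_rw [Finset.mul_sum]
  rw [Finset.sum_comm]
  refine Finset.sum_congr rfl fun x _ => ?_
  have h1 : (1 - ν x) = ∑ s, if s ≠ x then ν s else 0 := by
    have := Finset.sum_erase_eq_sub (f := ν) (Finset.mem_univ x)
    rw [← hν.2, ← this, ← Finset.sum_filter]
    congr 1
    ext s
    simp
  have h2 : (1 - ν x) ^ n = ∏ _i : Fin n, ∑ s, if s ≠ x then ν s else 0 := by
    rw [← h1]; simp
  rw [h2, Finset.prod_univ_sum, Fintype.piFinset_univ, Finset.mul_sum]
  refine Finset.sum_congr rfl fun X _ => ?_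
  by_cases h : ∀ i, X i ≠ x
  · rw [if_pos h, mul_comm]
    congr 1
    exact Finset.prod_congr rfl fun i _ => (if_pos (h i)).symm
  · rw [if_neg h]
    push Not at h
    obtain ⟨i, hi⟩ := h
    have hz : (∏ j, if X j ≠ x then ν (X j) else 0) = 0 :=
      Finset.prod_eq_zero (Finset.mem_univ i) (if_neg (not_not.mpr hi))
    rw [hz, mul_zero, mul_zero]

/-- the expected missing mass of `n` i.i.d. samples equals
`Σ_x ν(x)(1 − ν(x))^n` and is at most `4|S|/(9n)`. -/
theorem stmt_18 (S : Type) [Fintype S] [Nonempty S]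
    (ν : S → ℝ) (hν : IsDist ν) (n : ℕ) (hn : 1 ≤ n) :
    (∑ X : Fin n → S, wt1 ν X * missingMass ν X) =
        ∑ x, ν x * (1 - ν x) ^ n ∧
      (∑ X : Fin n → S, wt1 ν X * missingMass ν X) ≤
        4 * (Fintype.card S : ℝ) / (9 * n) := by
  have h := expect_eq S ν hν n
  refine ⟨h, ?_⟩
  rw [h]
  calc ∑ x, ν x * (1 - ν x) ^ n ≤ ∑ _x : S, (4 / (9 * n) : ℝ) :=
        Finset.sum_le_sum fun x _ => elem_bound _ (hν.1 x)
          (hν.2 ▸ Finset.single_le_sum (fun y _ => hν.1 y) (Finset.mem_univ x)) n hn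
    _ = 4 * (Fintype.card S : ℝ) / (9 * n) := by
        simp only [Finset.sum_const, Finset.card_univ, nsmul_eq_mul]; ring
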